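/- The triangular prism (the graph on vertices {1,2,3,4,5,6} with triangles 1–2–3 and 4–5–6 and matching edges 14, 25, 36) has representation number exactly 3: it is 3-representable but not 2-representable. -/

import Mathlib

/-!
A 3-uniform representing word is exhibited and checked by evaluation.  A 0-uniform word misses
letters, and in a 1-uniform word all letters alternate, whereas the prism has non-adjacent vertices.

For 2-uniform words, view the two positions of each letter as the endpoints of a chord; two letters
alternate iff their chords cross (`alternate_iff_cross`).  The three chords of a triangle cross
pairwise, so their endpoints appear on the circle in the order `x y z x y z` and cut it into six
arcs.  A chord crossing only one of them, say `x`, must join the two arcs next to one endpoint of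
`x` (`cross_first`, `cross_second`, `cross_third`).  If the three chords of the other triangle were
pairwise crossing too, the chosen endpoints of `x`, `y`, `z` would be pairwise neighbours among the
six endpoints, but a 6-cycle contains no triangle (`no_prism_chords`).
-/

/-- Letters `x` and `y` alternate in the word `w` if the subsequence of `w` consisting of
all occurrences of `x` and `y` has no two equal consecutive letters (i.e. is of the form
`xyxy⋯` or `yxyx⋯`). -/
def Alternate {V : Type*} [DecidableEq V] (w : List V) (x y : V) : Prop :=
  (w.filter (fun z => decide (z = x ∨ z = y))).Chain' (· ≠ ·)

/-- A word `w` over `V` represents the simple graph `G` if it contains every letter of `V`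
and distinct letters alternate in `w` iff they are adjacent in `G`. -/
def Represents {V : Type*} [DecidableEq V] (w : List V) (G : SimpleGraph V) : Prop :=
  (∀ v : V, v ∈ w) ∧ ∀ x y : V, x ≠ y → (Alternate w x y ↔ G.Adj x y)

/-- A graph is word-representable if some word represents it. -/
def WordRepresentable {V : Type*} [DecidableEq V] (G : SimpleGraph V) : Prop :=
  ∃ w : List V, Represents w G

/-- A graph is `k`-representable if some `k`-uniform word (every letter occurring
exactly `k` times) represents it. -/
def KRepresentable {V : Type*} [DecidableEq V] (G : SimpleGraph V) (k : ℕ) : Prop :=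
  ∃ w : List V, (∀ v : V, w.count v = k) ∧ Represents w G

/-- The triangular prism: triangles `1–2–3` and `4–5–6` (here `0–1–2` and `3–4–5`)
joined by the matching `14, 25, 36`. -/
def prism : SimpleGraph (Fin 6) :=
  SimpleGraph.fromRel (fun a b =>
    (a, b) ∈ ([(0, 1), (1, 2), (0, 2), (3, 4), (4, 5), (3, 5),
               (0, 3), (1, 4), (2, 5)] : List (Fin 6 × Fin 6)))

/-! ### Chords -/

/-- The chord with endpoints `a < b` crosses the chord with endpoints `c < d`
(on a circle cut open to the line `ℕ`). -/
def Cross (a b c d : ℕ) : Prop :=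
  (a < c ∧ c < b ∧ b < d) ∨ (c < a ∧ a < d ∧ d < b)

section Chords

variable {x₁ y₁ z₁ x₂ y₂ z₂ p q : ℕ}

/-- A chord meeting only the first of three pairwise crossing chords surrounds exactly one of its
endpoints; the middle alternative surrounds `x₁` across the point where the circle is cut open. -/
theorem cross_first (h : x₁ < y₁ ∧ y₁ < z₁ ∧ z₁ < x₂ ∧ x₂ < y₂ ∧ y₂ < z₂) (hpq : p < q)
    (hx : Cross x₁ x₂ p q) (hy : ¬ Cross y₁ y₂ p q) (hz : ¬ Cross z₁ z₂ p q)
    (hn : p ≠ y₁ ∧ p ≠ y₂ ∧ q ≠ y₁ ∧ q ≠ y₂)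
    (hn' : p ≠ z₁ ∧ p ≠ z₂ ∧ q ≠ z₁ ∧ q ≠ z₂) :
    (p < x₁ ∧ x₁ < q ∧ q < y₁) ∨ (x₁ < p ∧ p < y₁ ∧ z₂ < q) ∨
      (z₁ < p ∧ p < x₂ ∧ x₂ < q ∧ q < y₂) := by
  unfold Cross at *
  omega

theorem cross_second (h : x₁ < y₁ ∧ y₁ < z₁ ∧ z₁ < x₂ ∧ x₂ < y₂ ∧ y₂ < z₂) (hpq : p < q)
    (hx : ¬ Cross x₁ x₂ p q) (hy : Cross y₁ y₂ p q) (hz : ¬ Cross z₁ z₂ p q)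
    (hn : p ≠ x₁ ∧ p ≠ x₂ ∧ q ≠ x₁ ∧ q ≠ x₂)
    (hn' : p ≠ z₁ ∧ p ≠ z₂ ∧ q ≠ z₁ ∧ q ≠ z₂) :
    (x₁ < p ∧ p < y₁ ∧ y₁ < q ∧ q < z₁) ∨ (x₂ < p ∧ p < y₂ ∧ y₂ < q ∧ q < z₂) := by
  unfold Cross at *
  omega

/-- As `cross_first`, for the last chord; the last alternative surrounds `z₂` across the point
where the circle is cut open. -/
theorem cross_third (h : x₁ < y₁ ∧ y₁ < z₁ ∧ z₁ < x₂ ∧ x₂ < y₂ ∧ y₂ < z₂) (hpq : p < q)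
    (hx : ¬ Cross x₁ x₂ p q) (hy : ¬ Cross y₁ y₂ p q) (hz : Cross z₁ z₂ p q)
    (hn : p ≠ x₁ ∧ p ≠ x₂ ∧ q ≠ x₁ ∧ q ≠ x₂)
    (hn' : p ≠ y₁ ∧ p ≠ y₂ ∧ q ≠ y₁ ∧ q ≠ y₂) :
    (y₁ < p ∧ p < z₁ ∧ z₁ < q ∧ q < x₂) ∨ (y₂ < p ∧ p < z₂ ∧ z₂ < q) ∨
      (p < x₁ ∧ y₂ < q ∧ q < z₂) := by
  unfold Cross at *
  omega

end Chords

/-- No chord diagram realizes the prism with triangles `x y z`, `x' y' z'` and matching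
`xx'`, `yy'`, `zz'`, if the chords `x`, `y`, `z` start in this order. -/
theorem no_prism_chords {V : Type*} {a b : V → ℕ} (hab : ∀ v, a v < b v)
    (haa : ∀ u v, u ≠ v → a u ≠ a v ∧ a u ≠ b v ∧ b u ≠ a v ∧ b u ≠ b v)
    {G : SimpleGraph V}
    (hG : ∀ u v, u ≠ v → (Cross (a u) (b u) (a v) (b v) ↔ G.Adj u v))
    {x y z x' y' z' : V} (hxy : G.Adj x y) (hyz : G.Adj y z) (hxz : G.Adj x z)
    (hxy' : G.Adj x' y') (hyz' : G.Adj y' z') (hxz' : G.Adj x' z')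
    (hxx : G.Adj x x') (hyy : G.Adj y y') (hzz : G.Adj z z')
    (h₁ : x ≠ y' ∧ ¬ G.Adj x y') (h₂ : x ≠ z' ∧ ¬ G.Adj x z') (h₃ : y ≠ x' ∧ ¬ G.Adj y x')
    (h₄ : y ≠ z' ∧ ¬ G.Adj y z') (h₅ : z ≠ x' ∧ ¬ G.Adj z x') (h₆ : z ≠ y' ∧ ¬ G.Adj z y')
    (hlt : a x < a y) (hlt' : a y < a z) : False := by
  have pos : ∀ {u v}, G.Adj u v → Cross (a u) (b u) (a v) (b v) :=
    fun h => (hG _ _ h.ne).2 h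
  have neg : ∀ {u v}, u ≠ v ∧ ¬ G.Adj u v → ¬ Cross (a u) (b u) (a v) (b v) :=
    fun h hc => h.2 ((hG _ _ h.1).1 hc)
  have hord : a x < a y ∧ a y < a z ∧ a z < b x ∧ b x < b y ∧ b y < b z := by
    have c₁ := pos hxy
    have c₂ := pos hyz
    have c₃ := pos hxz
    unfold Cross at c₁ c₂ c₃
    omega
  have X := cross_first hord (hab x') (pos hxx) (neg h₃) (neg h₅)
    (haa _ _ h₃.1.symm) (haa _ _ h₅.1.symm)
  have Y := cross_second hord (hab y') (neg h₁) (pos hyy) (neg h₆)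
    (haa _ _ h₁.1.symm) (haa _ _ h₆.1.symm)
  have Z := cross_third hord (hab z') (neg h₂) (neg h₄) (pos hzz)
    (haa _ _ h₂.1.symm) (haa _ _ h₄.1.symm)
  have c₁ := pos hxy'
  have c₂ := pos hyz'
  have c₃ := pos hxz'
  unfold Cross at c₁ c₂ c₃
  clear pos neg
  rcases X with X | X | X <;> rcases Y with Y | Y <;> rcases Z with Z | Z | Z <;> omega

/-! ### Positions of letters in 2-uniform words -/

section Words

variable {V : Type*} [DecidableEq V]

theorem exists_split_of_count_two {w : List V} {v : V} (h : w.count v = 2) :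
    ∃ l₁ l₂ l₃, w = l₁ ++ v :: (l₂ ++ v :: l₃) ∧ v ∉ l₁ ∧ v ∉ l₂ ∧ v ∉ l₃ := by
  obtain ⟨l₁, t, rfl, h₁⟩ :=
    List.eq_append_cons_of_mem (List.count_pos_iff.1 (by omega : 0 < w.count v))
  have ht : t.count v = 1 := by
    simpa [List.count_append, List.count_eq_zero.2 h₁] using h
  obtain ⟨l₂, l₃, rfl, h₂⟩ :=
    List.eq_append_cons_of_mem (List.count_pos_iff.1 (by omega : 0 < t.count v))
  refine ⟨l₁, l₂, l₃, rfl, h₁, h₂, ?_⟩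
  simpa [List.count_append, List.count_eq_zero.2 h₂, List.count_eq_zero] using ht

theorem filter_pair_of_notMem {l : List V} {x y : V} (h : x ∉ l) :
    l.filter (fun z => decide (z = x ∨ z = y)) = List.replicate (l.count y) y := by
  rw [← List.filter_beq]
  refine List.filter_congr fun z hz => ?_
  have : z ≠ x := fun e => h (e ▸ hz)
  rw [Bool.eq_iff_iff]
  simp [this]

/-- If `x` occurs exactly twice and `y` occurs exactly twice, they alternate iff exactly one `y`
lies between the two occurrences of `x`. -/
theorem alternate_split {l₁ l₂ l₃ : List V} {x y : V} (hxy : x ≠ y)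
    (h₁ : x ∉ l₁) (h₂ : x ∉ l₂) (h₃ : x ∉ l₃)
    (hy : (l₁ ++ x :: (l₂ ++ x :: l₃)).count y = 2) :
    Alternate (l₁ ++ x :: (l₂ ++ x :: l₃)) x y ↔ l₂.count y = 1 := by
  have hc : l₁.count y + (l₂.count y + l₃.count y) = 2 := by
    simpa [List.count_cons, hxy] using hy
  unfold Alternate List.Chain'
  simp only [List.filter_append, List.filter_cons, filter_pair_of_notMem h₁,
    filter_pair_of_notMem h₂, filter_pair_of_notMem h₃]
  generalize l₁.count y = i at *
  generalize l₂.count y = j at *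
  generalize l₃.count y = k at *
  have hi : i ≤ 2 := by omega
  have hj : j ≤ 2 := by omega
  obtain rfl : k = 2 - i - j := by omega
  interval_cases i <;> interval_cases j <;>
    first
    | omega
    | simp [List.replicate, hxy, hxy.symm]

/-- `a` and `b` are the two positions of `v` in `w`. The redundant fields describe them through the
number of occurrences of `v` in each prefix and through the factorization of `w` at `v`. -/
structure IsChord (w : List V) (v : V) (a b : ℕ) : Prop where
  lt : a < b
  fst : w[a]? = some v
  snd : w[b]? = some v
  count_take : ∀ n, (w.take n).count v = (if a < n then 1 else 0) + (if b < n then 1 else 0)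
  split : ∃ l₁ l₂ l₃, w = l₁ ++ v :: (l₂ ++ v :: l₃) ∧ v ∉ l₁ ∧ v ∉ l₂ ∧ v ∉ l₃ ∧
    a = l₁.length ∧ b = l₁.length + l₂.length + 1

theorem exists_isChord {w : List V} {v : V} (h : w.count v = 2) : ∃ a b, IsChord w v a b := by
  obtain ⟨l₁, l₂, l₃, rfl, h₁, h₂, h₃⟩ := exists_split_of_count_two h
  refine ⟨l₁.length, l₁.length + l₂.length + 1, ⟨by omega, by simp, ?_, ?_,
    l₁, l₂, l₃, rfl, h₁, h₂, h₃, rfl, rfl⟩⟩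
  · rw [List.getElem?_append_right (by omega)]
    have : l₁.length + l₂.length + 1 - l₁.length = l₂.length + 1 := by omega
    simp [this]
  · intro n
    have zero : ∀ {l : List V}, v ∉ l → ∀ m, (l.take m).count v = 0 := fun hl m =>
      List.count_eq_zero.2 fun hm => hl (List.mem_of_mem_take hm)
    rw [List.take_append, List.count_append, zero h₁, zero_add]
    rcases hm : n - l₁.length with _ | m
    · rw [if_neg (by omega), if_neg (by omega)]; simp
    · rw [List.take_succ_cons, List.count_cons_self, List.take_append, List.count_append,
        zero h₂, zero_add, if_pos (by omega : l₁.length < n), add_comm]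
      congr 1
      rcases hk : m - l₂.length with _ | k
      · rw [if_neg (by omega)]; simp
      · rw [List.take_succ_cons, List.count_cons_self, zero h₃, if_pos (by omega)]

theorem IsChord.ne {w : List V} {x y : V} {a b c d : ℕ} (hx : IsChord w x a b)
    (hy : IsChord w y c d) (hxy : x ≠ y) : a ≠ c ∧ a ≠ d ∧ b ≠ c ∧ b ≠ d := by
  have := hx.fst
  have := hx.snd
  have := hy.fst
  have := hy.snd
  refine ⟨?_, ?_, ?_, ?_⟩ <;> rintro rfl <;> simp_all

theorem alternate_iff_cross {w : List V} {x y : V} {a b c d : ℕ} (hx : IsChord w x a b)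
    (hy : IsChord w y c d) (hcount : w.count y = 2) (hxy : x ≠ y) :
    Alternate w x y ↔ Cross a b c d := by
  have hne := hx.ne hy hxy
  have hcd := hy.lt
  have ha := hy.count_take a
  have hb := hy.count_take b
  obtain ⟨l₁, l₂, l₃, rfl, h₁, h₂, h₃, rfl, rfl⟩ := hx.split
  rw [alternate_split hxy h₁ h₂ h₃ hcount]
  have e : l₁.length + l₂.length + 1 - l₁.length = l₂.length + 1 := by omega
  have e' : List.take (l₁.length + l₂.length + 1) l₁ = l₁ := List.take_of_length_le (by omega)
  simp only [List.take_append, e, e', List.take_succ_cons, List.count_append, Nat.sub_self,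
    List.take_length, List.take_zero, List.count_nil, List.count_cons_of_ne hxy] at ha hb
  unfold Cross
  split_ifs at ha hb <;> omega

/-- In a 1-uniform word any two letters alternate. -/
theorem alternate_of_count_one {w : List V} (h : ∀ v, w.count v = 1) (x y : V) :
    Alternate w x y :=
  List.Pairwise.isChain
    ((List.nodup_iff_count_le_one.2 fun v => (h v).le).filter _)

end Words

/-! ### The prism -/

instance : DecidableRel prism.Adj := by
  unfold prism
  infer_instance

instance {V : Type*} [DecidableEq V] (w : List V) (x y : V) : Decidable (Alternate w x y) := by
  unfold Alternate List.Chain'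
  infer_instance

theorem prism_three : KRepresentable prism 3 := by
  refine ⟨[0, 1, 2, 3, 0, 4, 1, 5, 2, 3, 0, 4, 5, 3, 1, 4, 2, 5], ?_, ?_, ?_⟩
  · decide
  · decide
  · decide +kernel

theorem prism_not_zero : ¬ KRepresentable prism 0 := by
  rintro ⟨w, hc, hm, -⟩
  exact List.count_eq_zero.1 (hc 0) (hm 0)

theorem prism_not_one : ¬ KRepresentable prism 1 := by
  rintro ⟨w, hc, -, hr⟩
  exact absurd ((hr 0 4 (by decide)).1 (alternate_of_count_one hc 0 4)) (by decide)

theorem prism_not_two : ¬ KRepresentable prism 2 := by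
  rintro ⟨w, hc, -, hr⟩
  choose a b hab using fun v => exists_isChord (hc v)
  have hlt : ∀ v, a v < b v := fun v => (hab v).lt
  have hne := fun u v (h : u ≠ v) => (hab u).ne (hab v) h
  have hG := fun u v (h : u ≠ v) =>
    (alternate_iff_cross (hab u) (hab v) (hc v) h).symm.trans (hr u v h)
  -- The six permutations of the triangle extend to automorphisms of the prism.
  have key : ∀ x y z x' y' z' : Fin 6,
      (prism.Adj x y ∧ prism.Adj y z ∧ prism.Adj x z ∧
        prism.Adj x' y' ∧ prism.Adj y' z' ∧ prism.Adj x' z' ∧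
        prism.Adj x x' ∧ prism.Adj y y' ∧ prism.Adj z z' ∧
        (x ≠ y' ∧ ¬ prism.Adj x y') ∧ (x ≠ z' ∧ ¬ prism.Adj x z') ∧
        (y ≠ x' ∧ ¬ prism.Adj y x') ∧ (y ≠ z' ∧ ¬ prism.Adj y z') ∧
        (z ≠ x' ∧ ¬ prism.Adj z x') ∧ (z ≠ y' ∧ ¬ prism.Adj z y')) →
      ¬ (a x < a y ∧ a y < a z) := by
    rintro x y z x' y' z' ⟨e₁, e₂, e₃, e₄, e₅, e₆, e₇, e₈, e₉, n₁, n₂, n₃, n₄, n₅, n₆⟩ ⟨l₁, l₂⟩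
    exact no_prism_chords hlt hne hG e₁ e₂ e₃ e₄ e₅ e₆ e₇ e₈ e₉ n₁ n₂ n₃ n₄ n₅ n₆ l₁ l₂
  have k₁ := key 0 1 2 3 4 5 (by decide)
  have k₂ := key 0 2 1 3 5 4 (by decide)
  have k₃ := key 1 0 2 4 3 5 (by decide)
  have k₄ := key 1 2 0 4 5 3 (by decide)
  have k₅ := key 2 0 1 5 3 4 (by decide)
  have k₆ := key 2 1 0 5 4 3 (by decide)
  have d₁ := (hne 0 1 (by decide)).1
  have d₂ := (hne 0 2 (by decide)).1
  have d₃ := (hne 1 2 (by decide)).1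
  omega

/-- The triangular prism has representation number exactly 3: it is 3-representable but
not 2-representable. -/
theorem prism_repNum_three :
    IsLeast {k : ℕ | KRepresentable prism k} 3 ∧
    KRepresentable prism 3 ∧ ¬ KRepresentable prism 2 := by
  refine ⟨⟨prism_three, fun k hk => ?_⟩, prism_three, prism_not_two⟩
  by_contra! hlt
  have hk' : KRepresentable prism k := hk
  interval_cases k
  · exact prism_not_zero hk'
  · exact prism_not_one hk'
  · exact prism_not_two hk'
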